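/- Let n ≥ 2 and let H be a subgroup of the Houghton group H_n containing the commutator subgroup [H_n, H_n]. Then H is finitely generated if and only if χ_i(H) ≠ {0} for every i ∈ {1,…,n}, i.e., if and only if for each i there is some η ∈ H with χ_i(η) ≠ 0. -/

import Mathlib

/-- A map `f : {1,…,n} × ℕ → {1,…,n} × ℕ` is an *eventual translation* if for each
`i` there exist `m_i ∈ ℤ` and `N_i ∈ ℕ` with `f (i, x) = (i, x + m_i)` for all `x ≥ N_i`. -/
def IsEvTrans {n : ℕ} (f : Fin n × ℕ → Fin n × ℕ) : Prop :=
  ∀ i : Fin n, ∃ m : ℤ, ∃ N : ℕ, ∀ x : ℕ, N ≤ x →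
    (f (i, x)).1 = i ∧ ((f (i, x)).2 : ℤ) = (x : ℤ) + m

lemma IsEvTrans.id {n : ℕ} : IsEvTrans (id : Fin n × ℕ → Fin n × ℕ) :=
  fun i => ⟨0, 0, fun x _ => by simp⟩

lemma IsEvTrans.comp {n : ℕ} {f g : Fin n × ℕ → Fin n × ℕ}
    (hf : IsEvTrans f) (hg : IsEvTrans g) : IsEvTrans (f ∘ g) := by
  intro i
  obtain ⟨m₁, N₁, h₁⟩ := hg i
  obtain ⟨m₂, N₂, h₂⟩ := hf i
  refine ⟨m₁ + m₂, max N₁ ((N₂ : ℤ) - m₁).toNat, fun x hx => ?_⟩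
  have hx₁ : N₁ ≤ x := le_trans (le_max_left _ _) hx
  obtain ⟨hg1, hg2⟩ := h₁ x hx₁
  have hgix : g (i, x) = (i, (g (i, x)).2) := Prod.ext hg1 rfl
  have hxa : ((N₂ : ℤ) - m₁).toNat ≤ x := le_trans (le_max_right _ _) hx
  have hxb : (N₂ : ℤ) - m₁ ≤ ((((N₂ : ℤ) - m₁).toNat : ℤ)) := Int.self_le_toNat _
  have hyN : N₂ ≤ (g (i, x)).2 := by
    have : (N₂ : ℤ) ≤ ((g (i, x)).2 : ℤ) := by omega
    exact_mod_cast this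
  obtain ⟨hf1, hf2⟩ := h₂ (g (i, x)).2 hyN
  constructor
  · show (f (g (i, x))).1 = i
    rw [hgix]; exact hf1
  · show ((f (g (i, x))).2 : ℤ) = (x : ℤ) + (m₁ + m₂)
    rw [hgix, hf2, hg2]; ring

lemma IsEvTrans.inv {n : ℕ} {f : Equiv.Perm (Fin n × ℕ)} (hf : IsEvTrans ⇑f) :
    IsEvTrans ⇑f.symm := by
  intro i
  obtain ⟨m, N, h⟩ := hf i
  refine ⟨-m, ((N : ℤ) + m).toNat, fun y hy => ?_⟩
  have hy' : (N : ℤ) + m ≤ (y : ℤ) :=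
    le_trans (Int.self_le_toNat _) (by exact_mod_cast hy)
  set x := ((y : ℤ) - m).toNat with hxdef
  have hx : (x : ℤ) = (y : ℤ) - m := Int.toNat_of_nonneg (by omega)
  have hxN : N ≤ x := by omega
  obtain ⟨h1, h2⟩ := h x hxN
  have hfx : f (i, x) = (i, y) := by
    have h3 : ((f (i, x)).2 : ℤ) = (y : ℤ) := by rw [h2]; omega
    exact Prod.ext h1 (by exact_mod_cast h3)
  have hsymm : f.symm (i, y) = (i, x) := by rw [← hfx]; exact f.symm_apply_apply _
  rw [hsymm]
  exact ⟨rfl, by omega⟩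

/-- The Houghton group `H_n`, as the subgroup of `Equiv.Perm (Fin n × ℕ)` consisting
of the eventual translations. -/
def Houghton (n : ℕ) : Subgroup (Equiv.Perm (Fin n × ℕ)) where
  carrier := {η | IsEvTrans ⇑η}
  one_mem' := IsEvTrans.id
  mul_mem' := fun ha hb => IsEvTrans.comp ha hb
  inv_mem' := fun ha => IsEvTrans.inv ha

/-- The monoid `M_n` of injective eventual translations, as a submonoid of
`Function.End (Fin n × ℕ)` (whose multiplication is composition). -/
def Mmon (n : ℕ) : Submonoid (Function.End (Fin n × ℕ)) where
  carrier := {f | Function.Injective f ∧ IsEvTrans f}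
  one_mem' := ⟨fun _ _ h => h, IsEvTrans.id⟩
  mul_mem' := fun ha hb => ⟨ha.1.comp hb.1, IsEvTrans.comp ha.2 hb.2⟩

open Classical in
/-- `χ_i(f)` : the unique integer `m` such that `f (i, x) = (i, x + m)` for all
sufficiently large `x` (or junk value `0` if no such integer exists). -/
noncomputable def chiF (n : ℕ) (i : Fin n) (f : Fin n × ℕ → Fin n × ℕ) : ℤ :=
  if h : ∃ m : ℤ, ∃ N : ℕ, ∀ x : ℕ, N ≤ x →
      (f (i, x)).1 = i ∧ ((f (i, x)).2 : ℤ) = (x : ℤ) + m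
  then h.choose else 0


open Equiv in
/-- the three-cycle `x → y → z → x` -/
def cyc3 {α : Type*} [DecidableEq α] (x y z : α) : Perm α := swap x y * swap y z

section Cyc
open Equiv
open scoped commutatorElement
variable {α : Type*} [DecidableEq α]

lemma cyc3_conj (g : Perm α) (x y z : α) :
    g * cyc3 x y z * g⁻¹ = cyc3 (g x) (g y) (g z) := by
  simp only [cyc3, swap_apply_apply]; group

lemma cyc3_left {x y z : α} (hxy : x ≠ y) (hxz : x ≠ z) : cyc3 x y z x = y := by
  simp [cyc3, swap_apply_of_ne_of_ne hxy hxz]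

lemma cyc3_mid (x y z : α) (hxz : x ≠ z) (hyz : y ≠ z) : cyc3 x y z y = z := by
  simp [cyc3, swap_apply_of_ne_of_ne hxz.symm hyz.symm]

lemma cyc3_right (x y z : α) : cyc3 x y z z = x := by
  simp [cyc3]

lemma cyc3_other {x y z w : α} (hx : w ≠ x) (hy : w ≠ y) (hz : w ≠ z) : cyc3 x y z w = w := by
  simp [cyc3, swap_apply_of_ne_of_ne, *]

lemma cyc3_rot {x y z : α} (hxy : x ≠ y) (hyz : y ≠ z) (hxz : x ≠ z) :
    cyc3 y z x = cyc3 x y z := by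
  have h := cyc3_conj (cyc3 x y z) x y z
  rw [cyc3_left hxy hxz, cyc3_mid x y z hxz hyz, cyc3_right] at h
  rw [← h]; group

lemma cyc3_inv' (x y z : α) : (cyc3 x y z)⁻¹ = cyc3 z y x := by
  simp [cyc3, swap_comm]

lemma cyc3_inv {x y z : α} (hxy : x ≠ y) (hyz : y ≠ z) (hxz : x ≠ z) :
    (cyc3 x y z)⁻¹ = cyc3 y x z := by
  rw [cyc3_inv', cyc3_rot hyz.symm hxy.symm hxz.symm]

lemma cyc3_comm (x y z : α) (hxy : x ≠ y) (hyz : y ≠ z) (hxz : x ≠ z) :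
    cyc3 x y z = ⁅swap y z, swap x y⁆ := by
  have h : ⁅swap y z, swap x y⁆ = (cyc3 z y x) * cyc3 z y x := by
    simp [commutatorElement_def, cyc3, swap_comm, mul_assoc]
  rw [h]
  refine Equiv.ext fun w => ?_
  by_cases h1 : w = x
  · subst h1
    rw [cyc3_left hxy hxz, Perm.mul_apply, cyc3_right, cyc3_left hyz.symm hxz.symm]
  by_cases h2 : w = y
  · subst h2
    rw [cyc3_mid _ _ _ hxz hyz, Perm.mul_apply, cyc3_mid _ _ _ hxz.symm hxy.symm, cyc3_right]
  by_cases h3 : w = z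
  · subst h3
    rw [cyc3_right, Perm.mul_apply, cyc3_left hyz.symm hxz.symm, cyc3_mid _ _ _ hxz.symm hxy.symm]
  rw [cyc3_other h1 h2 h3, Perm.mul_apply, cyc3_other h3 h2 h1, cyc3_other h3 h2 h1]

lemma cyc3_step (K : Subgroup (Perm α)) {p q c y : α} (hpq : p ≠ q) (hpc : p ≠ c) (hqc : q ≠ c)
    (hyp : y ≠ p) (hyq : y ≠ q) (hyc : y ≠ c)
    (h1 : cyc3 p q c ∈ K) (h2 : cyc3 p q y ∈ K) : cyc3 p y c ∈ K := by
  have hg : cyc3 q p y ∈ K := by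
    rw [← cyc3_inv hpq hyq.symm hyp.symm]; exact K.inv_mem h2
  have h3 := K.inv_mem (K.mul_mem (K.mul_mem hg h1) (K.inv_mem hg))
  rw [cyc3_conj, cyc3_mid _ _ _ hyq.symm hyp.symm, cyc3_left hpq.symm hyq.symm,
    cyc3_other hqc.symm hpc.symm hyc.symm, cyc3_inv hyp hpc hyc] at h3
  exact h3

/-- `K` contains all three-cycles on the set `A` -/
def GoodSet (K : Subgroup (Perm α)) (A : Set α) : Prop :=
  ∀ x ∈ A, ∀ y ∈ A, ∀ z ∈ A, x ≠ y → y ≠ z → x ≠ z → cyc3 x y z ∈ K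

lemma GoodSet.insert {K : Subgroup (Perm α)} {A : Set α} (hA : GoodSet K A) {p q c : α}
    (hp : p ∈ A) (hq : q ∈ A) (hc : c ∉ A) (hpq : p ≠ q) (h : cyc3 p q c ∈ K) :
    GoodSet K (insert c A) := by
  have hne : ∀ x ∈ A, x ≠ c := fun x hx e => hc (e ▸ hx)
  have s1 : ∀ y ∈ A, y ≠ p → cyc3 p y c ∈ K := by
    intro y hy hyp
    by_cases hyq : y = q
    · subst hyq; exact h
    exact cyc3_step K hpq (hne p hp) (hne q hq) hyp hyq (hne y hy) h
      (hA p hp q hq y hy hpq (Ne.symm hyq) hyp.symm)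
  have key : ∀ x ∈ A, ∀ y ∈ A, x ≠ y → cyc3 x y c ∈ K := by
    intro x hx y hy hxy
    by_cases hxp : x = p
    · subst hxp; exact s1 y hy hxy.symm
    by_cases hyp : y = p
    · subst hyp
      have := K.inv_mem (s1 x hx hxp)
      rwa [cyc3_inv hxy.symm (hne x hx) (hne y hy)] at this
    have h1 := K.inv_mem (s1 y hy hyp)
    rw [cyc3_inv (Ne.symm hyp) (hne y hy) (hne p hp)] at h1
    have h2 := cyc3_step K hyp (hne y hy) (hne p hp) hxy hxp (hne x hx) h1
      (hA y hy p hp x hx hyp (Ne.symm hxp) hxy.symm)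
    have h3 := K.inv_mem h2
    rwa [cyc3_inv hxy.symm (hne x hx) (hne y hy)] at h3
  intro x hx y hy z hz hxy hyz hxz
  rcases hz with rfl | hz
  · exact key x (hx.resolve_left hxz) y (hy.resolve_left hyz) hxy
  rcases hy with rfl | hy
  · rw [cyc3_rot (x := z) (y := x) (z := y) hxz.symm hxy hyz.symm]
    exact key z hz x (hx.resolve_left hxy) hxz.symm
  rcases hx with rfl | hx
  · rw [← cyc3_rot hxy hyz hxz]
    exact key y hy z hz hyz
  exact hA x hx y hy z hz hxy hyz hxz

/-- the finitary alternating group -/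
def FAlt (α : Type*) [DecidableEq α] : Subgroup (Perm α) :=
  Subgroup.closure {σ | ∃ x y z : α, x ≠ y ∧ y ≠ z ∧ x ≠ z ∧ σ = cyc3 x y z}

lemma swap_swap_mem_FAlt {x y u v : α} (hxy : x ≠ y) (huv : u ≠ v) :
    swap x y * swap u v ∈ FAlt α := by
  have k : ∀ a b c : α, a ≠ b → b ≠ c → swap a b * swap b c ∈ FAlt α := by
    intro a b c hab hbc
    by_cases hac : a = c
    · subst hac; rw [swap_comm b a, swap_mul_self]; exact Subgroup.one_mem _
    exact Subgroup.subset_closure ⟨a, b, c, hab, hbc, hac, rfl⟩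
  by_cases hyu : y = u
  · subst hyu; exact k x y v hxy huv
  have := Subgroup.mul_mem _ (k x y u hxy hyu) (k y u v hyu huv)
  simpa [mul_assoc] using this

lemma parity {σ : Perm α} (h : (MulAction.fixedBy α σ)ᶜ.Finite) :
    σ ∈ FAlt α ∨ ∀ x y : α, x ≠ y → swap x y * σ ∈ FAlt α := by
  rw [← mem_closure_isSwap'] at h
  have key : ∀ s : Perm α, s.IsSwap → ∀ τ : Perm α,
      (τ ∈ FAlt α ∨ ∀ x y : α, x ≠ y → swap x y * τ ∈ FAlt α) →
      (s * τ ∈ FAlt α ∨ ∀ x y : α, x ≠ y → swap x y * (s * τ) ∈ FAlt α) := by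
    rintro s ⟨u, v, huv, rfl⟩ τ (h | h)
    · right
      intro x y hxy
      rw [← mul_assoc]
      exact Subgroup.mul_mem _ (swap_swap_mem_FAlt hxy huv) h
    · left; exact h u v huv
  induction h using Subgroup.closure_induction_left with
  | one => left; exact Subgroup.one_mem _
  | mul_left s hs τ _ ih => exact key s hs τ ih
  | inv_mul_cancel s hs τ _ ih =>
    have hs' : Perm.IsSwap s⁻¹ := by
      obtain ⟨u, v, huv, rfl⟩ := hs
      exact ⟨u, v, huv, swap_inv u v⟩
    exact key _ hs' τ ih

end Cyc

lemma subgroup_fg_int (n : ℕ) (P : AddSubgroup (Fin n → ℤ)) : P.FG := by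
  have h : (AddSubgroup.toIntSubmodule P).FG := IsNoetherian.noetherian _
  rw [Submodule.fg_iff_addSubgroup_fg] at h
  exact h

lemma exists_finite_lift {G : Type*} [Group G] (n : ℕ) (f : G →* Multiplicative (Fin n → ℤ))
    (H : Subgroup G) : ∃ T : Set G, T.Finite ∧ T ⊆ H ∧
      ∀ h ∈ H, ∃ k ∈ Subgroup.closure T, f k = f h := by
  have h : (H.map f).FG := by
    rw [Subgroup.fg_iff_add_fg]
    exact subgroup_fg_int n _
  obtain ⟨S, hS, hfin⟩ := (Subgroup.fg_iff _).1 h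
  have hsub : ∀ s ∈ S, ∃ g ∈ H, f g = s := by
    intro s hs
    have : s ∈ H.map f := hS ▸ Subgroup.subset_closure hs
    simpa using this
  choose! g hg1 hg2 using hsub
  refine ⟨Set.image g S, hfin.image _, ?_, ?_⟩
  · rintro _ ⟨s, hs, rfl⟩; exact hg1 s hs
  intro x hx
  have h1 : f x ∈ Subgroup.closure S := hS ▸ Subgroup.mem_map_of_mem f hx
  have h2 : Subgroup.closure S ≤ (Subgroup.closure (Set.image g S)).map f := by
    rw [Subgroup.closure_le]
    intro s hs
    exact ⟨g s, Subgroup.subset_closure ⟨s, hs, rfl⟩, hg2 s hs⟩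
  exact h2 h1

section Chi
open Equiv
variable {n : ℕ}

lemma chiF_spec {f : Fin n × ℕ → Fin n × ℕ} (hf : IsEvTrans f) (i : Fin n) :
    ∃ N : ℕ, ∀ x : ℕ, N ≤ x → (f (i, x)).1 = i ∧ ((f (i, x)).2 : ℤ) = (x : ℤ) + chiF n i f := by
  unfold chiF
  rw [dif_pos (hf i)]
  exact (hf i).choose_spec

lemma chiF_eq {f : Fin n × ℕ → Fin n × ℕ} {i : Fin n} {m : ℤ} {N : ℕ} (hf : IsEvTrans f)
    (h : ∀ x : ℕ, N ≤ x → (f (i, x)).1 = i ∧ ((f (i, x)).2 : ℤ) = (x : ℤ) + m) :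
    chiF n i f = m := by
  obtain ⟨N', h'⟩ := chiF_spec hf i
  have h1 := (h (max N N') (le_max_left _ _)).2
  have h2 := (h' (max N N') (le_max_right _ _)).2
  omega

lemma chiF_comp {f g : Fin n × ℕ → Fin n × ℕ} (hf : IsEvTrans f) (hg : IsEvTrans g) (i : Fin n) :
    chiF n i (f ∘ g) = chiF n i f + chiF n i g := by
  obtain ⟨N₁, h₁⟩ := chiF_spec hg i
  obtain ⟨N₂, h₂⟩ := chiF_spec hf i
  refine chiF_eq (N := max N₁ ((N₂ : ℤ) - chiF n i g).toNat) (hf.comp hg) fun x hx => ?_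
  obtain ⟨a, b⟩ := h₁ x (by omega)
  have e : g (i, x) = (i, (g (i, x)).2) := Prod.ext a rfl
  obtain ⟨c, d⟩ := h₂ (g (i, x)).2 (by omega)
  rw [Function.comp_apply, e]
  exact ⟨c, by rw [d, b]; ring⟩

lemma houghton_ev (η : Houghton n) : IsEvTrans ⇑(η : Perm (Fin n × ℕ)) := η.2

/-- the homomorphism `(χ_1,…,χ_n)` -/
noncomputable def chiHom (n : ℕ) : Houghton n →* Multiplicative (Fin n → ℤ) :=
  MonoidHom.mk' (fun η => Multiplicative.ofAdd fun i => chiF n i ⇑(η : Perm (Fin n × ℕ))) (by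
    intro a b
    rw [← ofAdd_add]
    congr 1
    funext i
    exact chiF_comp (houghton_ev a) (houghton_ev b) i)

lemma chiHom_apply (η : Houghton n) (i : Fin n) :
    Multiplicative.toAdd (chiHom n η) i = chiF n i ⇑(η : Perm (Fin n × ℕ)) := rfl

lemma chiF_inv (η : Houghton n) (i : Fin n) :
    chiF n i ⇑((η⁻¹ : Houghton n) : Perm (Fin n × ℕ)) = - chiF n i ⇑(η : Perm (Fin n × ℕ)) := by
  rw [← chiHom_apply, map_inv, toAdd_inv, Pi.neg_apply, chiHom_apply]

lemma swap_mem_houghton (x y : Fin n × ℕ) : swap x y ∈ Houghton n := by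
  intro i
  refine ⟨0, x.2 + y.2 + 1, fun k hk => ?_⟩
  have hx : (i, k) ≠ x := by rintro rfl; simp at hk
  have hy : (i, k) ≠ y := by rintro rfl; simp at hk
  rw [swap_apply_of_ne_of_ne hx hy]
  simp

lemma cyc3_mem_houghton (x y z : Fin n × ℕ) : cyc3 x y z ∈ Houghton n :=
  (Houghton n).mul_mem (swap_mem_houghton x y) (swap_mem_houghton y z)

/-- three-cycle as an element of the Houghton group -/
def hcyc (x y z : Fin n × ℕ) : Houghton n := ⟨cyc3 x y z, cyc3_mem_houghton x y z⟩

open scoped commutatorElement in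
lemma hcyc_mem {H : Subgroup (Houghton n)} (hH : commutator (Houghton n) ≤ H)
    {x y z : Fin n × ℕ} (hxy : x ≠ y) (hyz : y ≠ z) (hxz : x ≠ z) : hcyc x y z ∈ H := by
  apply hH
  have : hcyc x y z = ⁅(⟨swap y z, swap_mem_houghton y z⟩ : Houghton n),
      ⟨swap x y, swap_mem_houghton x y⟩⁆ := by
    apply Subtype.ext
    exact cyc3_comm x y z hxy hyz hxz
  rw [this, commutator_def]
  exact Subgroup.commutator_mem_commutator (Subgroup.mem_top _) (Subgroup.mem_top _)

lemma finite_support {η : Houghton n} (h : chiHom n η = 1) :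
    (MulAction.fixedBy (Fin n × ℕ) (η : Perm (Fin n × ℕ)))ᶜ.Finite := by
  choose N hN using chiF_spec (houghton_ev η)
  refine (Set.finite_univ.prod (Set.finite_lt_nat (Finset.univ.sup N))).subset ?_
  rintro ⟨i, x⟩ hx
  refine ⟨Set.mem_univ _, ?_⟩
  by_contra hlt
  apply hx
  have hle : N i ≤ x := (Finset.le_sup (f := N) (Finset.mem_univ i)).trans (by simpa using hlt)
  obtain ⟨a, b⟩ := hN i x hle
  have hz : chiF n i ⇑(η : Perm (Fin n × ℕ)) = 0 := by rw [← chiHom_apply, h]; rfl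
  rw [hz, add_zero] at b
  show (η : Perm (Fin n × ℕ)) (i, x) = (i, x)
  exact Prod.ext a (by exact_mod_cast b)

/-- growth of the good set -/
lemma good_all (K : Subgroup (Perm (Fin n × ℕ))) (η : Fin n → Perm (Fin n × ℕ))
    (hη : ∀ i, η i ∈ K) (m N : Fin n → ℕ) (hm : ∀ i, 0 < m i)
    (h : ∀ i x, N i ≤ x → η i (i, x) = (i, x + m i)) (L : ℕ) (hL : ∀ i, N i + m i + 3 ≤ L)
    (hgood : GoodSet K {p | p.2 < L}) : GoodSet K Set.univ := by
  have step : ∀ M, L ≤ M → GoodSet K {p | p.2 < M} → GoodSet K {p | p.2 < M + 1} := by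
    intro M hM hg
    have : ∀ s : Finset (Fin n), GoodSet K ({p | p.2 < M} ∪ {p | p.1 ∈ s ∧ p.2 = M}) := by
      intro s
      induction s using Finset.induction_on with
      | empty => simpa using hg
      | insert i s his ih =>
        have hLi := hL i
        have hmi := hm i
        have e : ({p | p.2 < M} ∪ {p | p.1 ∈ insert i s ∧ p.2 = M} : Set (Fin n × ℕ)) =
            insert (i, M) ({p | p.2 < M} ∪ {p | p.1 ∈ s ∧ p.2 = M}) := by
          ext ⟨j, x⟩
          simp only [Set.mem_union, Set.mem_ofPred_eq, Finset.mem_insert, Set.mem_insert_iff,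
            Prod.mk.injEq]
          tauto
        rw [e]
        have h1 : cyc3 (i, N i) (i, N i + 1) (i, M - m i) ∈ K := by
          apply hg <;> simp <;> omega
        have h2 := K.mul_mem (K.mul_mem (hη i) h1) (K.inv_mem (hη i))
        rw [cyc3_conj, h i _ le_rfl, h i _ (by omega), h i _ (by omega),
          show M - m i + m i = M by omega] at h2
        refine ih.insert (p := (i, N i + m i)) (q := (i, N i + 1 + m i)) ?_ ?_ ?_ ?_ h2
        · left; simp; omega
        · left; simp; omega
        · simp [his]
        · simp
    intro x hx y hy z hz
    have key : ∀ w : Fin n × ℕ, w.2 < M + 1 →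
        w ∈ ({p | p.2 < M} ∪ {p | p.1 ∈ Finset.univ ∧ p.2 = M} : Set (Fin n × ℕ)) := by
      intro w hw
      simp; omega
    exact this Finset.univ x (key x hx) y (key y hy) z (key z hz)
  have all : ∀ M, L ≤ M → GoodSet K {p | p.2 < M} := by
    intro M hM
    induction M, hM using Nat.le_induction with
    | base => exact hgood
    | succ M hM ih => exact step M hM ih
  intro x _ y _ z _
  exact all (L + x.2 + y.2 + z.2 + 1) (by omega) x (by simp; omega) y (by simp; omega) z
    (by simp)

lemma forward (H : Subgroup (Houghton n)) (hH : commutator (Houghton n) ≤ H) (hfg : H.FG)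
    (i : Fin n) : ∃ η : Houghton n, η ∈ H ∧ chiF n i ⇑(η : Perm (Fin n × ℕ)) ≠ 0 := by
  by_contra! hcon
  obtain ⟨S, hS⟩ := hfg
  choose N hN using fun η : Houghton n => chiF_spec (houghton_ev η) i
  set M := S.sup N
  have key : ∀ η ∈ H, ∀ x, M ≤ x → (η : Perm (Fin n × ℕ)) (i, x) = (i, x) := by
    intro η hη
    rw [← hS] at hη
    induction hη using Subgroup.closure_induction with
    | mem s hs =>
      intro x hx
      obtain ⟨a, b⟩ := hN s x ((Finset.le_sup (f := N) hs).trans hx)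
      rw [hcon s (hS ▸ Subgroup.subset_closure hs), add_zero] at b
      exact Prod.ext a (by exact_mod_cast b)
    | one => intro x _; rfl
    | mul a b _ _ ha hb =>
      intro x hx
      rw [Subgroup.coe_mul, Perm.mul_apply, hb x hx, ha x hx]
    | inv a _ ha =>
      intro x hx
      rw [Subgroup.coe_inv, Perm.inv_eq_iff_eq, ha x hx]
  have h1 : ((i, M) : Fin n × ℕ) ≠ (i, M + 1) := by simp
  have h2 : ((i, M + 1) : Fin n × ℕ) ≠ (i, M + 2) := by simp
  have h3 : ((i, M) : Fin n × ℕ) ≠ (i, M + 2) := by simp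
  have h4 := key _ (hcyc_mem hH h1 h2 h3) M le_rfl
  have h5 : cyc3 ((i, M) : Fin n × ℕ) (i, M + 1) (i, M + 2) (i, M) = (i, M + 1) := cyc3_left h1 h3
  exact h1 (h4.symm.trans h5)

lemma backward (hn : 2 ≤ n) (H : Subgroup (Houghton n)) (hH : commutator (Houghton n) ≤ H)
    (hchi : ∀ i : Fin n, ∃ η : Houghton n, η ∈ H ∧ chiF n i ⇑(η : Perm (Fin n × ℕ)) ≠ 0) :
    H.FG := by
  have hpos : ∀ i : Fin n, ∃ η : Houghton n, η ∈ H ∧ 0 < chiF n i ⇑(η : Perm (Fin n × ℕ)) := by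
    intro i
    obtain ⟨η, h1, h2⟩ := hchi i
    rcases lt_or_gt_of_ne h2 with h | h
    · exact ⟨η⁻¹, H.inv_mem h1, by rw [chiF_inv]; omega⟩
    · exact ⟨η, h1, h⟩
  choose η hηH hηpos using hpos
  choose N hN using fun i => chiF_spec (houghton_ev (η i)) i
  set m : Fin n → ℕ := fun i => (chiF n i ⇑(η i : Perm (Fin n × ℕ))).toNat with hm
  set L := Finset.univ.sup fun i => N i + m i + 3 with hLdef
  obtain ⟨T, hTfin, hTH, hT⟩ := exists_finite_lift n (chiHom n) H
  -- a possible odd element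
  obtain ⟨o, hoH, ho⟩ : ∃ o ∈ H, ∀ h ∈ H, chiHom n h = 1 →
      (h : Perm (Fin n × ℕ)) ∈ FAlt (Fin n × ℕ) ∨
      ((o⁻¹ * h : Houghton n) : Perm (Fin n × ℕ)) ∈ FAlt (Fin n × ℕ) := by
    by_cases hex : ∃ o ∈ H, chiHom n o = 1 ∧ (o : Perm (Fin n × ℕ)) ∉ FAlt (Fin n × ℕ)
    · obtain ⟨o, hoH, ho1, ho2⟩ := hex
      refine ⟨o, hoH, fun h hh h1 => ?_⟩
      have po := (parity (finite_support ho1)).resolve_left ho2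
      rcases parity (finite_support h1) with ph | ph
      · exact Or.inl ph
      right
      have hne : ((⟨0, by omega⟩, 0) : Fin n × ℕ) ≠ (⟨0, by omega⟩, 1) := by simp
      have := Subgroup.mul_mem _ (Subgroup.inv_mem _ (po _ _ hne)) (ph _ _ hne)
      simpa [mul_assoc] using this
    · push Not at hex
      exact ⟨1, H.one_mem, fun h hh h1 => Or.inl (hex h hh h1)⟩
  -- the small three-cycles
  let F : Set (Fin n × ℕ) := {p | p.2 < L}
  have hF : F.Finite := (Set.finite_univ.prod (Set.finite_lt_nat L)).subset
    fun p hp => ⟨Set.mem_univ _, hp⟩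
  let C : Set (Houghton n) := (Set.image (fun t : (Fin n × ℕ) × (Fin n × ℕ) × (Fin n × ℕ) =>
    hcyc t.1 t.2.1 t.2.2) (F ×ˢ (F ×ˢ F))) ∩ H
  have hC : C.Finite := ((hF.prod (hF.prod hF)).image _).inter_of_left _
  let S : Set (Houghton n) := T ∪ Set.range η ∪ {o} ∪ C
  have hS : S.Finite := ((hTfin.union (Set.finite_range η)).union (Set.finite_singleton o)).union hC
  let K := Subgroup.closure S
  have hKH : K ≤ H := by
    rw [Subgroup.closure_le]
    rintro x (((hx | ⟨i, rfl⟩) | rfl) | hx)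
    · exact hTH hx
    · exact hηH i
    · exact hoH
    · exact hx.2
  have hgood : GoodSet (K.map (Houghton n).subtype) {p | p.2 < L} := by
    intro x hx y hy z hz hxy hyz hxz
    refine ⟨hcyc x y z, Subgroup.subset_closure (Or.inr ⟨⟨(x, y, z), ⟨hx, hy, hz⟩, rfl⟩, ?_⟩), rfl⟩
    exact hcyc_mem hH hxy hyz hxz
  have hall := good_all (K.map (Houghton n).subtype) (fun i => (η i : Perm (Fin n × ℕ)))
    (fun i => ⟨η i, Subgroup.subset_closure (Or.inl (Or.inl (Or.inr ⟨i, rfl⟩))), rfl⟩) m N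
    (fun i => by have := hηpos i; simp only [hm]; omega)
    (fun i x hx => by
      obtain ⟨a, b⟩ := hN i x hx
      have := hηpos i
      refine Prod.ext a ?_
      simp only [hm]
      omega) L
    (fun i => Finset.le_sup (f := fun i => N i + m i + 3) (Finset.mem_univ i)) hgood
  have hA : FAlt (Fin n × ℕ) ≤ K.map (Houghton n).subtype := by
    unfold FAlt
    rw [Subgroup.closure_le]
    rintro _ ⟨x, y, z, hxy, hyz, hxz, rfl⟩
    exact hall x trivial y trivial z trivial hxy hyz hxz
  have hA' : ∀ g : Houghton n, (g : Perm (Fin n × ℕ)) ∈ FAlt (Fin n × ℕ) → g ∈ K := by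
    intro g hg
    obtain ⟨k, hk, e⟩ := hA hg
    rwa [← Subtype.ext (a1 := k) (a2 := g) e]
  refine (Subgroup.fg_iff _).2 ⟨S, le_antisymm hKH ?_, hS⟩
  intro h hh
  obtain ⟨k, hk, hke⟩ := hT h hh
  have hkK : k ∈ K := Subgroup.closure_mono (fun t ht => Or.inl (Or.inl (Or.inl ht))) hk
  have hoK : o ∈ K := Subgroup.subset_closure (Or.inl (Or.inr rfl))
  have h1 : chiHom n (k⁻¹ * h) = 1 := by rw [map_mul, map_inv, hke, inv_mul_cancel]
  have h2 : k⁻¹ * h ∈ K := by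
    rcases ho _ (H.mul_mem (H.inv_mem (hKH hkK)) hh) h1 with h2 | h2
    · exact hA' _ h2
    · have := K.mul_mem hoK (hA' _ h2)
      rwa [mul_inv_cancel_left] at this
  have := K.mul_mem hkK h2
  rwa [mul_inv_cancel_left] at this

end Chi

/-- A subgroup `H` of `H_n` containing the commutator subgroup is finitely generated if
and only if `χ_i(H) ≠ {0}` for every `i`. -/
theorem subgroup_above_commutator_fg_iff (n : ℕ) (hn : 2 ≤ n)
    (H : Subgroup ↥(Houghton n)) (hH : commutator ↥(Houghton n) ≤ H) :
    Group.FG ↥H ↔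
      ∀ i : Fin n, ∃ η : ↥(Houghton n), η ∈ H ∧
        chiF n i ⇑(η : Equiv.Perm (Fin n × ℕ)) ≠ 0 := by
  rw [Group.fg_iff_subgroup_fg]
  exact ⟨fun h i => forward H hH h i, backward hn H hH⟩
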